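/- For λ ∈ (0,1), 0 < α < 1/λ, β > 0, a positive integer n with n + α < 1/λ, the n-th moment of a degenerate gamma random variable X ~ Γ_λ(α,β) satisfies Γ_λ(α) · β^n · E[X^n] = Γ_λ(n+α), i.e., E[X^n] = Γ_λ(n+α)/(β^n Γ_λ(α)). -/

import Mathlib

open MeasureTheory

/-- The degenerate gamma function `Γ_λ(s) = ∫_0^∞ (1+λt)^{-1/λ} t^{s-1} dt`. -/
noncomputable def degGamma (lam s : ℝ) : ℝ :=
  ∫ t in Set.Ioi (0:ℝ), (1 + lam * t) ^ (-1/lam) * t ^ (s - 1)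

/-- The probability density function of the degenerate gamma distribution `Γ_λ(α,β)`. -/
noncomputable def degGammaPdf (lam α β x : ℝ) : ℝ :=
  if 0 < x then (1 / degGamma lam α) * β * (1 + lam * β * x) ^ (-1/lam) * (β * x) ^ (α - 1)
  else 0

theorem degGamma_moment (lam α β : ℝ) (hlam : lam ∈ Set.Ioo (0:ℝ) 1)
    (hα0 : 0 < α) (hα1 : α < 1 / lam) (hβ : 0 < β) (n : ℕ) (hn : 1 ≤ n)
    (hnα : n + α < 1 / lam) :
    ∫ x : ℝ, x ^ n * degGammaPdf lam α β x = degGamma lam (n + α) / (β ^ n * degGamma lam α) := by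
  have h1 : (fun x : ℝ => x ^ n * degGammaPdf lam α β x) =
      (Set.Ioi (0:ℝ)).indicator (fun x => (1 / degGamma lam α * β / β ^ n) *
        (fun t : ℝ => (1 + lam * t) ^ (-1/lam) * t ^ ((n + α) - 1)) (β * x)) := by
    funext x
    by_cases hx : 0 < x
    · rw [Set.indicator_of_mem (Set.mem_Ioi.mpr hx)]
      have hb : 0 < β * x := mul_pos hβ hx
      have e : (β * x) ^ ((n + α) - 1) = β ^ n * x ^ n * (β * x) ^ (α - 1) := by
        rw [add_sub_assoc, Real.rpow_add hb, Real.rpow_natCast, mul_pow]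
      have hbn : β ^ n ≠ 0 := (pow_pos hβ n).ne'
      simp only [degGammaPdf, if_pos hx]
      rw [e, ← mul_assoc lam β x]
      generalize (1 + lam * β * x) ^ (-1/lam) = A
      generalize (β * x) ^ (α - 1) = B
      generalize 1 / degGamma lam α = C
      field_simp
    · rw [Set.indicator_of_notMem (by simpa using hx)]
      simp [degGammaPdf, hx]
  rw [h1, integral_indicator measurableSet_Ioi, integral_const_mul,
    integral_comp_mul_left_Ioi (fun t : ℝ => (1 + lam * t) ^ (-1/lam) * t ^ ((n + α) - 1)) 0 hβ,
    mul_zero]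
  change _ * (β⁻¹ • degGamma lam (n + α)) = _
  rw [smul_eq_mul]
  have hbn : β ^ n ≠ 0 := (pow_pos hβ n).ne'
  rw [div_eq_mul_inv _ (β ^ n * _), mul_inv, one_div]
  generalize (degGamma lam α)⁻¹ = C
  field_simp
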